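/- arXiv:1711.09420 — 7 statements merged into one kernel-verified Lean document; each statement's English description precedes it below -/
import Mathlib

section
/- Let n be a positive integer and let f : ZMod n → ℂ be a function satisfying f(k) + f(k+4) + f(k+6) = 0 for every k ∈ ZMod n. Then f is identically zero. -/
/-!
Let `S` be the shift `(S g)(k) = g (k + 2)`, an isometry of `ℓ²(ZMod n)`; the hypothesis reads
`g + S²g + S³g = 0`. For real-valued `g`, taking norms in `g = -(S²g + S³g)` and in
`S³g = -(g + S²g)` gives `⟪g, Sg⟫ = ⟪g, S²g⟫ = -‖g‖² / 2`, so that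
`‖g + Sg + S²g‖² = 3‖g‖² + 4⟪g, Sg⟫ + 2⟪g, S²g⟫ = 0`. Thus `g + Sg + S²g = 0`; comparing its shift
`Sg + S²g + S³g = 0` with the hypothesis yields `g = Sg`, hence `3g = 0`. The complex case
follows by taking real and imaginary parts.
-/

theorem real_three_term_relation_eq_zero (n : ℕ) [NeZero n] (g : ZMod n → ℝ)
    (hg : ∀ k : ZMod n, g k + g (k + 4) + g (k + 6) = 0) (k : ZMod n) : g k = 0 := by
  have shift (F : ZMod n → ℝ) (a : ZMod n) : ∑ k, F (k + a) = ∑ k, F k :=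
    Equiv.sum_comp (Equiv.addRight a) F
  have p2 := shift (fun k => g k ^ 2) 2
  have p4 := shift (fun k => g k ^ 2) 4
  have p6 := shift (fun k => g k ^ 2) 6
  have a2 := shift (fun k => g k * g (k + 2)) 2
  have a4 := shift (fun k => g k * g (k + 2)) 4
  have e22 (k : ZMod n) : k + 2 + 2 = k + 4 := by ring
  have e42 (k : ZMod n) : k + 4 + 2 = k + 6 := by ring
  have e24 (k : ZMod n) : k + 2 + 4 = k + 6 := by ring
  simp only [e22, e42] at p2 p4 p6 a2 a4
  have h1 : ∑ k, g k ^ 2 =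
      ∑ k, g (k + 4) ^ 2 + ∑ k, g (k + 6) ^ 2 + 2 * ∑ k, g (k + 4) * g (k + 6) := by
    rw [Finset.mul_sum, ← Finset.sum_add_distrib, ← Finset.sum_add_distrib]
    refine Finset.sum_congr rfl fun k _ => ?_
    rw [show g k = -(g (k + 4) + g (k + 6)) by linarith [hg k]]
    ring
  have h2 : ∑ k, g (k + 6) ^ 2 =
      ∑ k, g k ^ 2 + ∑ k, g (k + 4) ^ 2 + 2 * ∑ k, g k * g (k + 4) := by
    rw [Finset.mul_sum, ← Finset.sum_add_distrib, ← Finset.sum_add_distrib]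
    refine Finset.sum_congr rfl fun k _ => ?_
    rw [show g (k + 6) = -(g k + g (k + 4)) by linarith [hg k]]
    ring
  have h3 : ∑ k, (g k + g (k + 2) + g (k + 4)) ^ 2 =
      ∑ k, g k ^ 2 + ∑ k, g (k + 2) ^ 2 + ∑ k, g (k + 4) ^ 2 + 2 * ∑ k, g k * g (k + 2)
        + 2 * ∑ k, g (k + 2) * g (k + 4) + 2 * ∑ k, g k * g (k + 4) := by
    simp only [Finset.mul_sum, ← Finset.sum_add_distrib]
    exact Finset.sum_congr rfl fun k _ => by ring
  have h4 : ∑ k, (g k + g (k + 2) + g (k + 4)) ^ 2 = 0 := by linarith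
  have h5 (k : ZMod n) : g k + g (k + 2) + g (k + 4) = 0 :=
    pow_eq_zero_iff two_ne_zero |>.1 <|
      (Finset.sum_eq_zero_iff_of_nonneg fun k _ => sq_nonneg _).1 h4 k (Finset.mem_univ k)
  have key (k : ZMod n) : g k = g (k + 2) := by
    have h := h5 (k + 2)
    rw [e22, e24] at h
    linarith [hg k]
  have h := key (k + 2)
  rw [e22] at h
  linarith [key k, h5 k]

/-- Lemma 3.2 of the paper: if `f : ℤ/nℤ → ℂ` satisfies
`f(k) + f(k+4) + f(k+6) = 0` for every `k`, then `f = 0`. -/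
theorem zmod_three_term_relation_eq_zero (n : ℕ) (hn : 0 < n) (f : ZMod n → ℂ)
    (hf : ∀ k : ZMod n, f k + f (k + 4) + f (k + 6) = 0) : f = 0 := by
  have : NeZero n := ⟨hn.ne'⟩
  funext k
  apply Complex.ext
  · exact real_three_term_relation_eq_zero n (fun k => (f k).re)
      (fun k => by simpa using congrArg Complex.re (hf k)) k
  · exact real_three_term_relation_eq_zero n (fun k => (f k).im)
      (fun k => by simpa using congrArg Complex.im (hf k)) k
end

section
/- Define a : ℤ → ℝ by the recurrence a(k) + a(k+1) + a(k+3) = 0 for all k ∈ ℤ together with a(1) = 1, a(2) = 0, a(3) = −1. Let x : ℤ → ℂ be any function and set Q(k) = x(k) + x(k+4) + x(k+6). Then for every integer m ≥ 1, Σ_{k=1}^{m} a(k)·Q(2k−1) = x(1) − a(m+1)·x(2m+1) − a(m+2)·x(2m+3) + a(m)·x(2m+5). -/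
/-! The identity follows by induction on `m`. Passing from `m` to `m + 1`, the terms of
`a (m + 1) * Q (2 * m + 1)` at `2 * m + 1` and `2 * m + 7` account for the change in the
boundary terms there, and the coefficient at `2 * m + 5` is right because
`a (m + 1) + a m = -a (m + 3)`. -/

/-- Equation (3.39) of the paper: the telescoping identity
`Σ_{k=1}^{m} a(k)·Q(2k−1) = x(1) − a(m+1)·x(2m+1) − a(m+2)·x(2m+3) + a(m)·x(2m+5)`,
where `a` satisfies `a(k) + a(k+1) + a(k+3) = 0` with `a(1)=1, a(2)=0, a(3)=−1`,
and `Q(k) = x(k) + x(k+4) + x(k+6)`. -/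
theorem telescoping_identity_odd (a : ℤ → ℝ)
    (ha : ∀ k : ℤ, a k + a (k + 1) + a (k + 3) = 0)
    (ha1 : a 1 = 1) (ha2 : a 2 = 0) (ha3 : a 3 = -1)
    (x : ℤ → ℂ) (Q : ℤ → ℂ) (hQ : ∀ k : ℤ, Q k = x k + x (k + 4) + x (k + 6))
    (m : ℤ) (hm : 1 ≤ m) :
    ∑ k ∈ Finset.Icc (1 : ℤ) m, (a k : ℂ) * Q (2 * k - 1)
      = x 1 - (a (m + 1) : ℂ) * x (2 * m + 1) - (a (m + 2) : ℂ) * x (2 * m + 3)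
        + (a m : ℂ) * x (2 * m + 5) := by
  induction m, hm using Int.leInduction with
  | base => norm_num [hQ, ha1, ha2, ha3]
  | succ m hm ih =>
    have hIcc : Finset.Icc (1 : ℤ) (m + 1) = insert (m + 1) (Finset.Icc 1 m) := by
      ext k
      simp only [Finset.mem_insert, Finset.mem_Icc]
      omega
    rw [hIcc, Finset.sum_insert (by simp), ih, hQ]
    -- The coefficients of `x (2 * m + 5)` match by the recurrence for `a` at `m`.
    have h : (a m : ℂ) + a (m + 1) + a (m + 3) = 0 := by exact_mod_cast ha m
    rw [show 2 * (m + 1) - 1 = 2 * m + 1 by ring, show 2 * m + 1 + 4 = 2 * m + 5 by ring,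
      show 2 * m + 1 + 6 = 2 * m + 7 by ring, show m + 1 + 1 = m + 2 by ring,
      show m + 1 + 2 = m + 3 by ring, show 2 * (m + 1) + 1 = 2 * m + 3 by ring,
      show 2 * (m + 1) + 3 = 2 * m + 5 by ring, show 2 * (m + 1) + 5 = 2 * m + 7 by ring]
    linear_combination x (2 * m + 5) * h
end

section
/- Define a : ℤ → ℝ by the recurrence a(k) + a(k+1) + a(k+3) = 0 for all k ∈ ℤ together with a(1) = 1, a(2) = 0, a(3) = −1. Let x : ℤ → ℂ be any function and set Q(k) = x(k) + x(k+4) + x(k+6). Then for every integer m ≥ 1 the following two identities hold: Σ_{k=1}^{m} a(k)·Q(2k+1) = x(3) − a(m+1)·x(2m+3) − a(m+2)·x(2m+5) + a(m)·x(2m+7), and Σ_{k=1}^{m} a(k)·Q(2k+3) = x(5) − a(m+1)·x(2m+5) − a(m+2)·x(2m+7) + a(m)·x(2m+9). -/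
/-!
Both identities are the cases `s = 1` and `s = 3` of one telescoping sum (`telescoping_aux`),
proved by induction on `m`. The base case is a direct evaluation from the initial values of `a`,
and in the induction step everything cancels except the terms in `x (2 * m + s + 6)`, whose
coefficients sum to zero by the recurrence for `a`.
-/

/-- Both telescoping identities at once, with an arbitrary shift `s` of the argument of `Q`.
Writing `R m` for the right-hand side, the recurrence for `a` is exactly what makes
`R (m + 1) - R m = a (m + 1) * Q (2 * (m + 1) + s)`: the coefficient of `x (2 * m + s + 6)`
on the left is `-a (m + 3) - a m = a (m + 1)`. -/
theorem telescoping_aux (a : ℤ → ℝ)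
    (ha : ∀ k : ℤ, a k + a (k + 1) + a (k + 3) = 0)
    (ha1 : a 1 = 1) (ha2 : a 2 = 0) (ha3 : a 3 = -1)
    (x : ℤ → ℂ) (Q : ℤ → ℂ) (hQ : ∀ k : ℤ, Q k = x k + x (k + 4) + x (k + 6))
    (s m : ℤ) (hm : 1 ≤ m) :
    ∑ k ∈ Finset.Icc (1 : ℤ) m, (a k : ℂ) * Q (2 * k + s)
      = x (s + 2) - (a (m + 1) : ℂ) * x (2 * m + s + 2)
        - (a (m + 2) : ℂ) * x (2 * m + s + 4) + (a m : ℂ) * x (2 * m + s + 6) := by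
  induction m, hm using Int.leInduction with
  | base =>
    rw [Finset.Icc_self, Finset.sum_singleton, hQ,
      show (1 : ℤ) + 1 = 2 by norm_num, show (1 : ℤ) + 2 = 3 by norm_num, ha1, ha2, ha3,
      show 2 * 1 + s = s + 2 by ring]
    push_cast
    ring
  | succ m hm ih =>
    have hI : Finset.Icc (1 : ℤ) (m + 1) = insert (m + 1) (Finset.Icc 1 m) := by
      ext k
      simp only [Finset.mem_Icc, Finset.mem_insert]
      omega
    have h : (a m : ℂ) + a (m + 1) + a (m + 3) = 0 := by exact_mod_cast ha m
    rw [hI, Finset.sum_insert (by simp), ih, hQ,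
      show 2 * (m + 1) + s = 2 * m + s + 2 by ring,
      show m + 1 + 1 = m + 2 by ring, show m + 1 + 2 = m + 3 by ring,
      show 2 * m + s + 2 + 2 = 2 * m + s + 4 by ring,
      show 2 * m + s + 2 + 4 = 2 * m + s + 6 by ring]
    linear_combination x (2 * m + s + 6) * h


/-- Equation (3.40) of the paper: the shifted telescoping identities
`Σ_{k=1}^{m} a(k)·Q(2k+1) = x(3) − a(m+1)·x(2m+3) − a(m+2)·x(2m+5) + a(m)·x(2m+7)` and
`Σ_{k=1}^{m} a(k)·Q(2k+3) = x(5) − a(m+1)·x(2m+5) − a(m+2)·x(2m+7) + a(m)·x(2m+9)`,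
where `a` satisfies `a(k) + a(k+1) + a(k+3) = 0` with `a(1)=1, a(2)=0, a(3)=−1`,
and `Q(k) = x(k) + x(k+4) + x(k+6)`. -/
theorem telescoping_identities_shifted (a : ℤ → ℝ)
    (ha : ∀ k : ℤ, a k + a (k + 1) + a (k + 3) = 0)
    (ha1 : a 1 = 1) (ha2 : a 2 = 0) (ha3 : a 3 = -1)
    (x : ℤ → ℂ) (Q : ℤ → ℂ) (hQ : ∀ k : ℤ, Q k = x k + x (k + 4) + x (k + 6))
    (m : ℤ) (hm : 1 ≤ m) :
    (∑ k ∈ Finset.Icc (1 : ℤ) m, (a k : ℂ) * Q (2 * k + 1)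
      = x 3 - (a (m + 1) : ℂ) * x (2 * m + 3) - (a (m + 2) : ℂ) * x (2 * m + 5)
        + (a m : ℂ) * x (2 * m + 7)) ∧
    (∑ k ∈ Finset.Icc (1 : ℤ) m, (a k : ℂ) * Q (2 * k + 3)
      = x 5 - (a (m + 1) : ℂ) * x (2 * m + 5) - (a (m + 2) : ℂ) * x (2 * m + 7)
        + (a m : ℂ) * x (2 * m + 9)) := by
  have h1 := telescoping_aux a ha ha1 ha2 ha3 x Q hQ 1 m hm
  have h3 := telescoping_aux a ha ha1 ha2 ha3 x Q hQ 3 m hm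
  norm_num [add_assoc] at h1 h3
  exact ⟨h1, h3⟩
end

section
/- Define a : ℤ → ℝ by the recurrence a(k) + a(k+1) + a(k+3) = 0 for all k ∈ ℤ together with a(1) = 1, a(2) = 0, a(3) = −1. Let n ≥ 1 and let x : ℤ → ℂ be n-periodic (x(k+n) = x(k) for all k) with x(k) + x(k+4) + x(k+6) = 0 for every k ∈ ℤ. Then the values x(1), x(3), x(5) satisfy the homogeneous linear system: (1−a(n+1))·x(1) − a(n+2)·x(3) + a(n)·x(5) = 0, −a(n)·x(1) + (1−a(n+1))·x(3) + a(n−1)·x(5) = 0, and −a(n−1)·x(1) − a(n)·x(3) + (1+a(n−2))·x(5) = 0. -/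
/-! Along odd indices the recurrence for `x` can be run backwards, and the sequence `a` is its
fundamental solution: `x (1 - 2m) = a (m+1) x 1 + a (m+2) x 3 - a m x 5` for every `m`, together
with the analogous formulas for `x (3 - 2m)` and `x (5 - 2m)` (`backward_formula`). For `m = n`
the left-hand sides are `x 1`, `x 3`, `x 5` by periodicity, which is the linear system. -/

/-- The three consecutive odd-index values are carried together so that the third-order
recurrence closes the induction. -/
lemma backward_formula (a : ℤ → ℝ)
    (ha : ∀ k : ℤ, a k + a (k + 1) + a (k + 3) = 0)
    (ha1 : a 1 = 1) (ha2 : a 2 = 0) (ha3 : a 3 = -1) (x : ℤ → ℂ)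
    (hx : ∀ k : ℤ, x k + x (k + 4) + x (k + 6) = 0) (m : ℕ) :
    x (1 - 2 * (m : ℤ)) = a ((m : ℤ) + 1) * x 1 + a ((m : ℤ) + 2) * x 3 - a (m : ℤ) * x 5 ∧
    x (3 - 2 * (m : ℤ)) = a (m : ℤ) * x 1 + a ((m : ℤ) + 1) * x 3 - a ((m : ℤ) - 1) * x 5 ∧
    x (5 - 2 * (m : ℤ)) = a ((m : ℤ) - 1) * x 1 + a (m : ℤ) * x 3 - a ((m : ℤ) - 2) * x 5 := by
  induction m with
  | zero =>
    have h0 : a 0 = 0 := by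
      have := ha 0
      norm_num at this
      linarith
    have h1 : a (-1) = 0 := by
      have := ha (-1)
      norm_num at this
      linarith
    have h2 : a (-2) = -1 := by
      have := ha (-2)
      norm_num at this
      linarith
    simp [h0, h1, h2, ha1, ha2]
  | succ m ih =>
    obtain ⟨i1, i2, i3⟩ := ih
    have shift (j : ℤ) : (a j : ℂ) + a (j + 1) + a (j + 3) = 0 := by exact_mod_cast ha j
    have r0 := shift m
    have r1 := shift ((m : ℤ) - 1)
    have r2 := shift ((m : ℤ) - 2)
    have hk := hx (1 - 2 * ((m : ℤ) + 1))
    rw [show (1 - 2 * ((m : ℤ) + 1) + 4) = 3 - 2 * (m : ℤ) by ring,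
      show (1 - 2 * ((m : ℤ) + 1) + 6) = 5 - 2 * (m : ℤ) by ring] at hk
    rw [show (m : ℤ) - 1 + 1 = m by ring, show (m : ℤ) - 1 + 3 = m + 2 by ring] at r1
    rw [show (m : ℤ) - 2 + 1 = m - 1 by ring, show (m : ℤ) - 2 + 3 = m + 1 by ring] at r2
    push_cast
    rw [show (3 - 2 * ((m : ℤ) + 1)) = 1 - 2 * (m : ℤ) by ring,
      show (5 - 2 * ((m : ℤ) + 1)) = 3 - 2 * (m : ℤ) by ring,
      show (m : ℤ) + 1 + 1 = m + 2 by ring, show (m : ℤ) + 1 + 2 = m + 3 by ring,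
      show (m : ℤ) + 1 - 1 = m by ring, show (m : ℤ) + 1 - 2 = m - 1 by ring]
    refine ⟨?_, i1, i2⟩
    linear_combination hk - i2 - i3 - r1 * x 1 - r0 * x 3 + r2 * x 5

/-- Equations (3.41)–(3.42) of the paper: if `x : ℤ → ℂ` is `n`-periodic and satisfies
`x(k) + x(k+4) + x(k+6) = 0` for all `k`, then `x(1), x(3), x(5)` satisfy a homogeneous
`3 × 3` linear system with coefficients built from the sequence `a`. -/
theorem periodic_solution_linear_system (a : ℤ → ℝ)
    (ha : ∀ k : ℤ, a k + a (k + 1) + a (k + 3) = 0)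
    (ha1 : a 1 = 1) (ha2 : a 2 = 0) (ha3 : a 3 = -1)
    (n : ℕ) (hn : 1 ≤ n) (x : ℤ → ℂ)
    (hper : ∀ k : ℤ, x (k + (n : ℤ)) = x k)
    (hx : ∀ k : ℤ, x k + x (k + 4) + x (k + 6) = 0) :
    ((1 - a ((n : ℤ) + 1) : ℂ) * x 1 - (a ((n : ℤ) + 2) : ℂ) * x 3
        + (a (n : ℤ) : ℂ) * x 5 = 0) ∧
    (-(a (n : ℤ) : ℂ) * x 1 + (1 - a ((n : ℤ) + 1) : ℂ) * x 3
        + (a ((n : ℤ) - 1) : ℂ) * x 5 = 0) ∧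
    (-(a ((n : ℤ) - 1) : ℂ) * x 1 - (a (n : ℤ) : ℂ) * x 3
        + (1 + a ((n : ℤ) - 2) : ℂ) * x 5 = 0) := by
  obtain ⟨h1, h2, h3⟩ := backward_formula a ha ha1 ha2 ha3 x hx n
  -- the step `2n` in the formula is two periods
  have back (k : ℤ) : x (k - 2 * (n : ℤ)) = x k := by
    rw [← hper (k - 2 * (n : ℤ)), ← hper (k - 2 * (n : ℤ) + n)]
    congr 1
    ring
  rw [back] at h1 h2 h3
  refine ⟨?_, ?_, ?_⟩
  · linear_combination h1
  · linear_combination h2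
  · linear_combination h3
end

section
/- Define a : ℤ → ℝ by the recurrence a(k) + a(k+1) + a(k+3) = 0 for all k ∈ ℤ together with a(1) = 1, a(2) = 0, a(3) = −1, and let z₁, z₂, z₃ ∈ ℂ be the three roots (with multiplicity) of the polynomial z³ + z + 1. Then for every integer n ≥ 1, the determinant of the 3×3 real matrix with rows (1−a(n+1), −a(n+2), a(n)), (−a(n), 1−a(n+1), a(n−1)), (−a(n−1), −a(n), 1+a(n−2)) equals (1 − z₁ⁿ)(1 − z₂ⁿ)(1 − z₃ⁿ). -/
/-!
The sequence `a` gives the coordinates of the powers of a root `z` of `z³ + z + 1` in the basis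
`1, z, z²`, namely `zⁿ = -a (n - 2) + a n * z + a (n - 1) * z²`. Hence
`1 - zⁿ = (1 + a (n - 2)) - a n * z - a (n - 1) * z²`, whose coefficients form the last row of the
matrix, and the right-hand side is the product of this quadratic over the three roots. That product
is symmetric, so it is a polynomial in `a n`, `a (n - 1)`, `a (n - 2)` once the elementary symmetric
functions `0, 1, -1` of the roots are inserted; it agrees with the determinant after `a (n + 1)` and
`a (n + 2)` are eliminated by the recurrence.
-/

/-- Coordinates of `zⁿ` in the basis `1, z, z²`, for a root `z` of `z³ + z + 1`. -/
lemma root_pow_eq (a : ℤ → ℝ) (ha : ∀ k : ℤ, a k + a (k + 1) + a (k + 3) = 0)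
    (ha1 : a 1 = 1) (ha2 : a 2 = 0) (ha3 : a 3 = -1) (z : ℂ) (hz : z ^ 3 + z + 1 = 0) (n : ℕ) :
    z ^ n = -(a ((n : ℤ) - 2) : ℂ) + a n * z + a ((n : ℤ) - 1) * z ^ 2 := by
  have h0 : a 0 = 0 := by
    have := ha 0
    norm_num at this
    linarith
  have hm1 : a (-1) = 0 := by
    have := ha (-1)
    norm_num at this
    linarith
  have hm2 : a (-2) = -1 := by
    have := ha (-2)
    norm_num at this
    linarith
  induction n with
  | zero => simp [h0, hm1, hm2]
  | succ k ih =>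
    have h := ha ((k : ℤ) - 2)
    rw [show (k : ℤ) - 2 + 1 = k - 1 by ring, show (k : ℤ) - 2 + 3 = k + 1 by ring] at h
    have hc : (a ((k : ℤ) - 2) : ℂ) + a ((k : ℤ) - 1) + a ((k : ℤ) + 1) = 0 := by
      exact_mod_cast h
    rw [pow_succ, ih]
    push_cast
    rw [show (k : ℤ) + 1 - 2 = k - 1 by ring, show (k : ℤ) + 1 - 1 = k by ring]
    linear_combination (a ((k : ℤ) - 1) : ℂ) * hz - z * hc

/-- The product of a quadratic over three numbers, in terms of their elementary symmetric
functions when these are `0, 1, -1`. -/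
lemma prod_quadratic_eq (x y z u v w : ℂ) (e1 : x + y + z = 0) (e2 : x * y + x * z + y * z = 1)
    (e3 : x * y * z = -1) :
    (u + v * x + w * x ^ 2) * (u + v * y + w * y ^ 2) * (u + v * z + w * z ^ 2) =
      u ^ 3 - 2 * u ^ 2 * w + u * v ^ 2 + 3 * u * v * w + u * w ^ 2 - v ^ 3 - v * w ^ 2
        + w ^ 3 := by
  have expand : ∀ s t p : ℂ, s = x + y + z → t = x * y + x * z + y * z → p = x * y * z →
      (u + v * x + w * x ^ 2) * (u + v * y + w * y ^ 2) * (u + v * z + w * z ^ 2) =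
      u ^ 3 + u ^ 2 * v * s + u ^ 2 * w * (s ^ 2 - 2 * t) + u * v ^ 2 * t
        + u * v * w * (s * t - 3 * p) + u * w ^ 2 * (t ^ 2 - 2 * s * p) + v ^ 3 * p
        + v ^ 2 * w * s * p + v * w ^ 2 * t * p + w ^ 3 * p ^ 2 := by
    rintro s t p rfl rfl rfl
    ring
  rw [expand 0 1 (-1) e1.symm e2.symm e3.symm]
  ring


/-- The determinant evaluation (3.47) from the proof of Lemma 3.2 of the paper: the
determinant of the `3 × 3` matrix built from the sequence `a` equals
`(1 − z₁ⁿ)(1 − z₂ⁿ)(1 − z₃ⁿ)`, where `z₁, z₂, z₃` are the roots (with multiplicity)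
of `z³ + z + 1`. -/
theorem determinant_evaluation (a : ℤ → ℝ)
    (ha : ∀ k : ℤ, a k + a (k + 1) + a (k + 3) = 0)
    (ha1 : a 1 = 1) (ha2 : a 2 = 0) (ha3 : a 3 = -1)
    (z₁ z₂ z₃ : ℂ)
    (hroots : ∀ z : ℂ, z ^ 3 + z + 1 = (z - z₁) * (z - z₂) * (z - z₃))
    (n : ℤ) (hn : 1 ≤ n) :
    ((Matrix.det
        !![1 - a (n + 1), -(a (n + 2)), a n;
           -(a n), 1 - a (n + 1), a (n - 1);
           -(a (n - 1)), -(a n), 1 + a (n - 2)] : ℝ) : ℂ)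
      = (1 - z₁ ^ n) * (1 - z₂ ^ n) * (1 - z₃ ^ n) := by
  have hz₁ : z₁ ^ 3 + z₁ + 1 = 0 := by rw [hroots]; ring
  have hz₂ : z₂ ^ 3 + z₂ + 1 = 0 := by rw [hroots]; ring
  have hz₃ : z₃ ^ 3 + z₃ + 1 = 0 := by rw [hroots]; ring
  -- Vieta's formulas, read off by evaluating the factorization at `0`, `1` and `-1`.
  have p0 := hroots 0
  have p1 := hroots 1
  have pm := hroots (-1)
  have e3 : z₁ * z₂ * z₃ = -1 := by linear_combination p0
  have e1 : z₁ + z₂ + z₃ = 0 := by linear_combination (p1 + pm) / 2 - p0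
  have e2 : z₁ * z₂ + z₁ * z₃ + z₂ * z₃ = 1 := by linear_combination -(p1 - pm) / 2
  lift n to ℕ using by lia
  have r1 := ha ((n : ℤ) - 2)
  rw [show (n : ℤ) - 2 + 1 = n - 1 by ring, show (n : ℤ) - 2 + 3 = n + 1 by ring] at r1
  have r2 := ha ((n : ℤ) - 1)
  rw [show (n : ℤ) - 1 + 1 = n by ring, show (n : ℤ) - 1 + 3 = n + 2 by ring] at r2
  have s1 : a ((n : ℤ) + 1) = -a ((n : ℤ) - 2) - a ((n : ℤ) - 1) := by linarith
  have s2 : a ((n : ℤ) + 2) = -a ((n : ℤ) - 1) - a n := by linarith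
  have key := prod_quadratic_eq z₁ z₂ z₃ (1 + a ((n : ℤ) - 2)) (-a n) (-a ((n : ℤ) - 1)) e1 e2 e3
  simp only [zpow_natCast]
  rw [root_pow_eq a ha ha1 ha2 ha3 z₁ hz₁, root_pow_eq a ha ha1 ha2 ha3 z₂ hz₂,
    root_pow_eq a ha ha1 ha2 ha3 z₃ hz₃, Matrix.det_fin_three]
  simp [s1, s2]
  linear_combination -key
end

section
/- Define a : ℤ → ℝ by the recurrence a(k) + a(k+1) + a(k+3) = 0 for all k ∈ ℤ together with a(1) = 1, a(2) = 0, a(3) = −1. Then for every integer n ≥ 1, the 3×3 real matrix with rows (1−a(n+1), −a(n+2), a(n)), (−a(n), 1−a(n+1), a(n−1)), (−a(n−1), −a(n), 1+a(n−2)) is invertible. -/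
/-!
The matrix is `1 - C ^ n`, where `C` is the companion matrix of `x ^ 3 + x + 1`, acting on
windows `(f (k + 2), f (k + 1), f k)` of solutions of the recurrence. It is singular only if `C ^ n`
fixes a nonzero vector. This is excluded by a quadratic form `lyapunovForm` with
`Q (C v) = Q v - 3 (v 2) ^ 2`: the form is nonincreasing along orbits, hence constant on a periodic
one, so the last coordinate of every vector fixed by `C ^ n` vanishes. As `C v` and `C ^ 2 v` are
fixed along with `v`, all three coordinates of `v` vanish.
-/

/-- The companion matrix of `x ^ 3 + x + 1`; it sends `(f (k + 2), f (k + 1), f k)` to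
`(f (k + 3), f (k + 2), f (k + 1))` when `f k + f (k + 1) + f (k + 3) = 0`. -/
def recurrenceMatrix : Matrix (Fin 3) (Fin 3) ℝ :=
  !![0, -1, -1; 1, 0, 0; 0, 1, 0]

/-- An indefinite quadratic form that decreases by `3 (v 2) ^ 2` under `recurrenceMatrix`.
With `x, y, z, w = f k, …, f (k + 3)` and `x + y + w = 0`, it comes from writing the vanishing
combination `((y + w) ^ 2 - x ^ 2) - 2 * z * (x + y + w) + 2 * ((x + y) ^ 2 - w ^ 2)` as `3 * x ^ 2`
plus a difference of consecutive values of a quadratic form. -/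
def lyapunovForm (v : Fin 3 → ℝ) : ℝ :=
  2 * v 2 ^ 2 - v 1 ^ 2 - v 0 ^ 2 - 4 * v 2 * v 1 - 2 * v 1 * v 0 + 2 * v 2 * v 0

open Matrix in
lemma recurrenceMatrix_mulVec (v : Fin 3 → ℝ) :
    recurrenceMatrix *ᵥ v = ![-v 1 - v 2, v 0, v 1] := by
  ext i
  fin_cases i <;> simp [recurrenceMatrix, Matrix.mulVec, dotProduct, Fin.sum_univ_three]
  ring

open Matrix in
lemma lyapunovForm_step (v : Fin 3 → ℝ) :
    lyapunovForm (recurrenceMatrix *ᵥ v) = lyapunovForm v - 3 * v 2 ^ 2 := by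
  rw [recurrenceMatrix_mulVec]
  simp [lyapunovForm]
  ring

open Matrix in
lemma lyapunovForm_pow_le (m : ℕ) (v : Fin 3 → ℝ) :
    lyapunovForm (recurrenceMatrix ^ m *ᵥ v) ≤ lyapunovForm v := by
  induction m with
  | zero => simp
  | succ m ih =>
    rw [pow_succ', ← Matrix.mulVec_mulVec, lyapunovForm_step]
    nlinarith [sq_nonneg ((recurrenceMatrix ^ m *ᵥ v) 2)]

open Matrix in
/-- The form returns to its initial value after `m + 1` steps, so its decrease `3 (v 2) ^ 2` in
the first step must be zero. -/
lemma last_eq_zero_of_fixed (m : ℕ) (v : Fin 3 → ℝ)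
    (hv : recurrenceMatrix ^ (m + 1) *ᵥ v = v) : v 2 = 0 := by
  have h := lyapunovForm_pow_le m (recurrenceMatrix *ᵥ v)
  rw [Matrix.mulVec_mulVec, ← pow_succ, hv, lyapunovForm_step] at h
  nlinarith [sq_nonneg (v 2)]

open Matrix in
lemma eq_zero_of_fixed (m : ℕ) (v : Fin 3 → ℝ)
    (hv : recurrenceMatrix ^ (m + 1) *ᵥ v = v) : v = 0 := by
  have step : ∀ w : Fin 3 → ℝ, recurrenceMatrix ^ (m + 1) *ᵥ w = w →
      recurrenceMatrix ^ (m + 1) *ᵥ (recurrenceMatrix *ᵥ w) = recurrenceMatrix *ᵥ w := by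
    intro w hw
    rw [Matrix.mulVec_mulVec, ← pow_succ, pow_succ', ← Matrix.mulVec_mulVec, hw]
  have h2 := last_eq_zero_of_fixed m v hv
  have h1 := last_eq_zero_of_fixed m _ (step v hv)
  have h0 := last_eq_zero_of_fixed m _ (step _ (step v hv))
  simp only [recurrenceMatrix_mulVec] at h0 h1
  ext i
  fin_cases i
  · simpa using h0
  · simpa using h1
  · simpa using h2

lemma recurrenceMatrix_pow (a : ℤ → ℝ)
    (ha : ∀ k : ℤ, a k + a (k + 1) + a (k + 3) = 0)
    (ha1 : a 1 = 1) (ha2 : a 2 = 0) (ha3 : a 3 = -1) (m : ℕ) :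
    recurrenceMatrix ^ m =
      !![a (m + 1), a (m + 2), -a m;
         a m, a (m + 1), -a (m - 1);
         a (m - 1), a m, -a (m - 2)] := by
  induction m with
  | zero =>
    have h0 : a 0 = 0 := by
      have := ha 0
      norm_num at this
      linarith
    have hm1 : a (-1) = 0 := by
      have := ha (-1)
      norm_num at this
      linarith
    have hm2 : a (-2) = -1 := by
      have := ha (-2)
      norm_num at this
      linarith
    ext i j
    fin_cases i <;> fin_cases j <;> simp [h0, hm1, hm2, ha1, ha2]
  | succ m ih =>
    have e1 := ha ((m : ℤ) - 1)
    have e2 := ha (m : ℤ)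
    have e3 := ha ((m : ℤ) - 2)
    rw [show (m : ℤ) - 1 + 1 = m by ring, show (m : ℤ) - 1 + 3 = m + 2 by ring] at e1
    rw [show (m : ℤ) - 2 + 1 = m - 1 by ring, show (m : ℤ) - 2 + 3 = m + 1 by ring] at e3
    rw [pow_succ', ih]
    push_cast
    rw [show (m : ℤ) + 1 + 1 = m + 2 by ring, show (m : ℤ) + 1 + 2 = m + 3 by ring,
      show (m : ℤ) + 1 - 1 = m by ring, show (m : ℤ) + 1 - 2 = m - 1 by ring]
    ext i j
    fin_cases i <;> fin_cases j <;>
      simp [recurrenceMatrix, Matrix.mul_apply, Fin.sum_univ_three] <;> linarith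

/-- The key invertibility step in the proof of Lemma 3.2 of the paper: the `3 × 3` matrix
built from the sequence `a` (defined by `a(k) + a(k+1) + a(k+3) = 0`, `a(1)=1`, `a(2)=0`,
`a(3)=−1`) is invertible for every integer `n ≥ 1`. -/
theorem matrix_from_recurrence_invertible (a : ℤ → ℝ)
    (ha : ∀ k : ℤ, a k + a (k + 1) + a (k + 3) = 0)
    (ha1 : a 1 = 1) (ha2 : a 2 = 0) (ha3 : a 3 = -1)
    (n : ℤ) (hn : 1 ≤ n) :
    IsUnit (!![1 - a (n + 1), -(a (n + 2)), a n;
               -(a n), 1 - a (n + 1), a (n - 1);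
               -(a (n - 1)), -(a n), 1 + a (n - 2)] : Matrix (Fin 3) (Fin 3) ℝ) := by
  obtain ⟨m, rfl⟩ : ∃ m : ℕ, n = ((m + 1 : ℕ) : ℤ) := ⟨(n - 1).toNat, by omega⟩
  have key : IsUnit ((1 : Matrix (Fin 3) (Fin 3) ℝ) - recurrenceMatrix ^ (m + 1)) := by
    rw [← Matrix.mulVec_injective_iff_isUnit]
    intro v w hvw
    apply sub_eq_zero.mp
    apply eq_zero_of_fixed m
    have h : Matrix.mulVec (1 - recurrenceMatrix ^ (m + 1)) (v - w) = 0 := by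
      rw [Matrix.mulVec_sub]
      exact sub_eq_zero.mpr hvw
    rw [Matrix.sub_mulVec, Matrix.one_mulVec] at h
    exact (sub_eq_zero.mp h).symm
  rw [recurrenceMatrix_pow a ha ha1 ha2 ha3] at key
  convert key using 1
  ext i j
  fin_cases i <;> fin_cases j <;> simp
end

section
/- For every integer n ≥ 1, Σ_{λ=1}^{n} [ λ·(1/2)(λ−1)(2n+4−λ)(2n+5−λ) + (n+λ)·(1/2)(n+λ−1)(n−λ+4)(n−λ+5) ] + (2n+1)·12n + (2n+2)·(6n+3) + (2n+3)·(2n+2) = (2/15)·(2n+5)(2n+3)(n+3)(n+2)(n+1). -/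
/-!
Put `N = 2n + 4` and `f k = (1/2) k (k - 1) (N - k) (N + 1 - k)`. Both families of characters
contribute values of `f`, at `k = l` and at `k = n + l`, so the sum over `l` is the sum of `f` over
`1 ≤ k ≤ 2n`; the three remaining terms are `f (2n + 1)`, `f (2n + 2)` and `f (2n + 3)`. The total is
thus a Vandermonde convolution `2 ∑ C(k, 2) C(2n + 5 - k, 2) = 2 C(2n + 6, 5)`. The partial sums of
`f` are evaluated by an explicit polynomial antidifference (`sum_cartanTerm`).
-/

/-- The weighted character `k * v_k` as a polynomial in `k`, where `N` stands for `2n + 4`. -/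
def cartanTerm (N k : ℚ) : ℚ := k * ((1 / 2) * (k - 1) * (N - k) * (N + 1 - k))

/-- An antidifference of `cartanTerm N`, found by expanding `(N - k) * (N + 1 - k)` as
`(k - 2) * (k - 3) + (4 - 2 * N) * (k - 2) + (N - 2) * (N - 1)` and summing falling factorials. -/
def cartanPrimitive (N m : ℚ) : ℚ :=
  (1 / 2) * ((m + 1) * m * (m - 1)) *
    ((m - 2) * (m - 3) / 5 + (4 - 2 * N) * (m - 2) / 4 + (N - 2) * (N - 1) / 3)

/-- The offset `a` lets the same formula serve the ranges `1, …, n` and `n + 1, …, 2n`. -/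
lemma sum_cartanTerm (N a : ℚ) (m : ℕ) :
    ∑ l ∈ Finset.Icc 1 m, cartanTerm N (a + l) =
      cartanPrimitive N (a + m) - cartanPrimitive N a := by
  induction m with
  | zero => simp
  | succ m ih =>
    rw [Finset.sum_Icc_succ_top (by omega), ih]
    simp only [cartanTerm, cartanPrimitive]
    push_cast
    ring

/-- The Cartan test computation (3.55) of the paper: the weighted sum `Σ k·v_k` of the
Cartan characters equals the dimension `D = (2/15)(2n+5)(2n+3)(n+3)(n+2)(n+1)`. -/
theorem cartan_test_computation (n : ℕ) (hn : 1 ≤ n) :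
    (∑ l ∈ Finset.Icc 1 n,
        ((l : ℚ) * ((1 / 2) * ((l : ℚ) - 1) * (2 * (n : ℚ) + 4 - l) * (2 * (n : ℚ) + 5 - l))
          + ((n : ℚ) + l) *
              ((1 / 2) * ((n : ℚ) + l - 1) * ((n : ℚ) - l + 4) * ((n : ℚ) - l + 5))))
      + (2 * (n : ℚ) + 1) * (12 * n) + (2 * (n : ℚ) + 2) * (6 * (n : ℚ) + 3)
      + (2 * (n : ℚ) + 3) * (2 * (n : ℚ) + 2)
      = (2 / 15) * (2 * (n : ℚ) + 5) * (2 * (n : ℚ) + 3) * ((n : ℚ) + 3) * ((n : ℚ) + 2)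
          * ((n : ℚ) + 1) := by
  have h₁ := sum_cartanTerm (2 * n + 4) 0 n
  have h₂ := sum_cartanTerm (2 * n + 4) n n
  have h : ∀ l ∈ Finset.Icc 1 n,
      ((l : ℚ) * ((1 / 2) * ((l : ℚ) - 1) * (2 * (n : ℚ) + 4 - l) * (2 * (n : ℚ) + 5 - l))
          + ((n : ℚ) + l) *
              ((1 / 2) * ((n : ℚ) + l - 1) * ((n : ℚ) - l + 4) * ((n : ℚ) - l + 5)))
        = cartanTerm (2 * n + 4) (0 + l) + cartanTerm (2 * n + 4) (n + l) := by
    intro l _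
    simp only [cartanTerm]
    ring
  rw [Finset.sum_congr rfl h, Finset.sum_add_distrib, h₁, h₂]
  simp only [cartanPrimitive]
  ring
end
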